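/- Let I ⊂ ℝ be a bounded interval with center z and let 1 < p < ∞. The maximal operator N_I f(x) = sup_{r ∈ 2^ℤ} |I|^{−1} ∫_I |f(x − r y)| dy maps L^p(ℝ) to L^p(ℝ) with operator norm O((log(2 + |z|/|I|))^{1/p}). -/

import Mathlib

open MeasureTheory

/-- The lacunary maximal operator `N_I f(x) = sup_{r ∈ 2^ℤ} |I|⁻¹ ∫_I |f(x - r y)| dy`
over the interval `I = (z - L, z + L)` of center `z` and length `2L`. -/
noncomputable def lacMax (z L : ℝ) (f : ℝ → ℝ) (x : ℝ) : ENNReal :=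
  ⨆ n : ℤ, (ENNReal.ofReal (2 * L))⁻¹ *
    ∫⁻ y in Set.Ioo (z - L) (z + L), ENNReal.ofReal |f (x - (2 : ℝ) ^ n * y)|

/-!
The proof goes through in any finite-dimensional normed space. At each point where `N_I f` exceeds
`t`, some average over a ball `ball c (2 ^ n * L)` exceeds `t`, where `c` is the point shifted by
`-2 ^ n • z`. Select disjoint balls among these by Vitali's lemma. Every other ball has its center
in the double of a selected ball at least as large, so the level set is covered by the translates
of the doubled balls by `2 ^ m • z`, where `m` is at most the scale of the ball. Once `2 ^ m * ‖z‖`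
drops below the radius, these translates essentially coincide; only about `log (2 + ‖z‖ / L)` of
them matter, which gives the weak type `(1, 1)` constant. Interpolation with the trivial `L^∞`
bound raises this constant to the power `1 / p`.
-/

open Metric Module Set

open scoped ENNReal

section Interpolation

variable {α β : Type*} [MeasurableSpace α] [MeasurableSpace β] {μ : Measure α} {ν : Measure β}

lemma lintegral_Ioi_ofReal_rpow_eq_top (s : ℝ) :
    ∫⁻ t in Ioi (0 : ℝ), ENNReal.ofReal (t ^ s) = ∞ := by
  have hnonneg : 0 ≤ᵐ[volume.restrict (Ioi 0)] fun t : ℝ => t ^ s := by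
    filter_upwards [ae_restrict_mem measurableSet_Ioi] with t ht
    exact Real.rpow_nonneg (le_of_lt ht) s
  by_contra h
  exact not_integrableOn_Ioi_rpow s
    ((lintegral_ofReal_ne_top_iff_integrable (by fun_prop) hnonneg).1 h)

lemma lintegral_rpow_eq_lintegral_meas_ofReal_lt_mul {F : α → ℝ≥0∞} (hF : AEMeasurable F μ)
    {p : ℝ} (hp : 0 < p) :
    ∫⁻ x, F x ^ p ∂μ = ENNReal.ofReal p *
      ∫⁻ t in Ioi (0 : ℝ), μ {x | ENNReal.ofReal t < F x} * ENNReal.ofReal (t ^ (p - 1)) := by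
  by_cases htop : μ {x | F x = ∞} = 0
  · have hfin : ∀ᵐ x ∂μ, F x ≠ ∞ := by simpa [ae_iff] using htop
    have hpow : ∫⁻ x, F x ^ p ∂μ = ∫⁻ x, ENNReal.ofReal ((F x).toReal ^ p) ∂μ := by
      refine lintegral_congr_ae ?_
      filter_upwards [hfin] with x hx
      rw [ENNReal.toReal_rpow, ENNReal.ofReal_toReal (ENNReal.rpow_ne_top_of_nonneg hp.le hx)]
    have hlevel : ∀ t ∈ Ioi (0 : ℝ), μ {x | t < (F x).toReal} = μ {x | ENNReal.ofReal t < F x} := by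
      intro t ht
      refine measure_congr ?_
      filter_upwards [hfin] with x hx
      exact propext (ENNReal.ofReal_lt_iff_lt_toReal (le_of_lt ht) hx).symm
    rw [hpow, lintegral_rpow_eq_lintegral_meas_lt_mul μ (.of_forall fun _ => ENNReal.toReal_nonneg)
      hF.ennreal_toReal hp]
    congr 1
    exact setLIntegral_congr_fun measurableSet_Ioi fun t ht => by rw [hlevel t ht]
  · have hleft : ∫⁻ x, F x ^ p ∂μ = ∞ :=
      lintegral_eq_top_of_measure_eq_top_ne_zero (hF.pow_const p) <| by
        simpa [ENNReal.rpow_eq_top_iff_of_pos hp] using htop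
    have hright : ∫⁻ t in Ioi (0 : ℝ),
        μ {x | ENNReal.ofReal t < F x} * ENNReal.ofReal (t ^ (p - 1)) = ∞ := by
      refine top_unique ?_
      calc ∞ = ∫⁻ t in Ioi (0 : ℝ), μ {x | F x = ∞} * ENNReal.ofReal (t ^ (p - 1)) := by
            rw [lintegral_const_mul _ (by fun_prop), lintegral_Ioi_ofReal_rpow_eq_top,
              ENNReal.mul_top htop]
        _ ≤ _ := by
            gcongr with t x
            rintro (hx : F x = ∞)
            simp [hx]
    rw [hleft, hright, ENNReal.mul_top (by simpa using hp)]

lemma lintegral_rpow_withDensity_self {g : β → ℝ≥0∞} (hg : AEMeasurable g ν) {s : ℝ}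
    (hs : 0 ≤ s) : ∫⁻ y, g y ^ s ∂ν.withDensity g = ∫⁻ y, g y ^ (1 + s) ∂ν := by
  rw [lintegral_withDensity_eq_lintegral_mul₀ hg (hg.pow_const s)]
  refine lintegral_congr fun y => ?_
  rw [Pi.mul_apply, ENNReal.rpow_add_of_nonneg _ _ zero_le_one hs, ENNReal.rpow_one]

lemma lintegral_rpow_le_of_forall_mul_meas_lt_le {F : α → ℝ≥0∞} (hF : AEMeasurable F μ)
    {g : β → ℝ≥0∞} (hg : AEMeasurable g ν) {A : ℝ≥0∞} {p : ℝ} (hp : 1 < p)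
    (h : ∀ t, t * μ {x | t < F x} ≤ A * ∫⁻ y in {y | t < g y}, g y ∂ν) :
    ∫⁻ x, F x ^ p ∂μ ≤ ENNReal.ofReal (p / (p - 1)) * A * ∫⁻ y, g y ^ p ∂ν := by
  have hp1 : 0 < p - 1 := sub_pos.2 hp
  have hp0 : 0 < p := zero_lt_one.trans hp
  set ρ : Measure β := ν.withDensity g with hρ
  have hgρ : AEMeasurable g ρ := hg.mono_ac (withDensity_absolutelyContinuous ν g)
  have hlevel : ∀ t ∈ Ioi (0 : ℝ),
      μ {x | ENNReal.ofReal t < F x} * ENNReal.ofReal (t ^ (p - 1)) ≤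
        A * (ρ {y | ENNReal.ofReal t < g y} * ENNReal.ofReal (t ^ (p - 1 - 1))) := by
    intro t ht
    have hset : NullMeasurableSet {y | ENNReal.ofReal t < g y} ν :=
      nullMeasurableSet_lt aemeasurable_const hg
    have ht0 : 0 < t := ht
    calc μ {x | ENNReal.ofReal t < F x} * ENNReal.ofReal (t ^ (p - 1))
        = ENNReal.ofReal t * μ {x | ENNReal.ofReal t < F x} * ENNReal.ofReal (t ^ (p - 1 - 1)) := by
          rw [mul_right_comm, ← ENNReal.ofReal_mul ht0.le, Real.rpow_sub_one ht0.ne' (p - 1),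
            mul_div_cancel₀ _ ht0.ne', mul_comm]
      _ ≤ A * ρ {y | ENNReal.ofReal t < g y} * ENNReal.ofReal (t ^ (p - 1 - 1)) := by
          rw [hρ, withDensity_apply₀ _ hset]
          gcongr ?_ * _
          exact h _
      _ = _ := mul_assoc _ _ _
  have hanti : Antitone fun t : ℝ => ρ {y | ENNReal.ofReal t < g y} := fun s t hst =>
    measure_mono fun y (hy : ENNReal.ofReal t < g y) => (ENNReal.ofReal_le_ofReal hst).trans_lt hy
  have hmeas : Measurable fun t : ℝ =>
      ρ {y | ENNReal.ofReal t < g y} * ENNReal.ofReal (t ^ (p - 1 - 1)) :=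
    hanti.measurable.mul (by fun_prop)
  calc ∫⁻ x, F x ^ p ∂μ
      = ENNReal.ofReal p * ∫⁻ t in Ioi (0 : ℝ),
          μ {x | ENNReal.ofReal t < F x} * ENNReal.ofReal (t ^ (p - 1)) :=
        lintegral_rpow_eq_lintegral_meas_ofReal_lt_mul hF hp0
    _ ≤ ENNReal.ofReal p * ∫⁻ t in Ioi (0 : ℝ),
          A * (ρ {y | ENNReal.ofReal t < g y} * ENNReal.ofReal (t ^ (p - 1 - 1))) := by
        gcongr 1
        exact setLIntegral_mono' measurableSet_Ioi hlevel
    _ = ENNReal.ofReal (p / (p - 1)) * A * (ENNReal.ofReal (p - 1) * ∫⁻ t in Ioi (0 : ℝ),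
          ρ {y | ENNReal.ofReal t < g y} * ENNReal.ofReal (t ^ (p - 1 - 1))) := by
        rw [lintegral_const_mul _ hmeas, mul_mul_mul_comm,
          ← ENNReal.ofReal_mul (by positivity), div_mul_cancel₀ _ hp1.ne']
    _ = _ := by
        rw [← lintegral_rpow_eq_lintegral_meas_ofReal_lt_mul hgρ hp1, hρ,
          lintegral_rpow_withDensity_self hg hp1.le, add_sub_cancel]

/-- Marcinkiewicz interpolation, splitting `F` at height `t / 2` for each level `t` of `T F`. -/
lemma lintegral_rpow_le_of_weakType_one_one {T : (β → ℝ≥0∞) → α → ℝ≥0∞} {A : ℝ≥0∞}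
    (hadd : ∀ G H, Measurable G → Measurable H → ∀ x, T (G + H) x ≤ T G x + T H x)
    (hbdd : ∀ G s, (∀ y, G y ≤ s) → ∀ x, T G x ≤ s)
    (hweak : ∀ G, Measurable G → ∀ t, t * μ {x | t < T G x} ≤ A * ∫⁻ y, G y ∂ν)
    {F : β → ℝ≥0∞} (hF : Measurable F) (hTF : AEMeasurable (T F) μ) {p : ℝ} (hp : 1 < p) :
    ∫⁻ x, T F x ^ p ∂μ ≤ ENNReal.ofReal (p / (p - 1)) * A * (2 ^ p * ∫⁻ y, F y ^ p ∂ν) := by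
  have hlevel : ∀ t, t * μ {x | t < T F x} ≤ A * ∫⁻ y in {y | t < 2 * F y}, 2 * F y ∂ν := by
    intro t
    set S : Set β := {y | t < 2 * F y}
    have hS : MeasurableSet S := measurableSet_lt measurable_const (hF.const_mul 2)
    have hlow : Sᶜ.indicator F ≤ fun _ => t / 2 := by
      refine indicator_le fun y (hy : ¬ t < 2 * F y) => ?_
      rw [ENNReal.le_div_iff_mul_le (by simp) (by simp), mul_comm]
      exact not_lt.1 hy
    have hsub : {x | t < T F x} ⊆ {x | t / 2 < T (S.indicator F) x} := by
      intro x (hx : t < T F x)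
      have hsplit := hadd _ _ (hF.indicator hS) (hF.indicator hS.compl) x
      rw [indicator_self_add_compl] at hsplit
      have hx' : t / 2 + t / 2 < T (S.indicator F) x + t / 2 := by
        rw [ENNReal.add_halves]
        exact hx.trans_le (hsplit.trans (by gcongr; exact hbdd _ _ hlow x))
      exact lt_of_add_lt_add_right hx'
    calc t * μ {x | t < T F x}
        = 2 * (t / 2 * μ {x | t < T F x}) := by
          rw [← mul_assoc, ENNReal.mul_div_cancel two_ne_zero ENNReal.ofNat_ne_top]
      _ ≤ 2 * (A * ∫⁻ y, S.indicator F y ∂ν) := by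
          gcongr 2 * ?_
          exact (mul_le_mul_right (measure_mono hsub) _).trans (hweak _ (hF.indicator hS) _)
      _ = A * ∫⁻ y in S, 2 * F y ∂ν := by
          rw [lintegral_indicator hS, lintegral_const_mul _ hF, mul_left_comm]
  have hpow : ∫⁻ y, (2 * F y) ^ p ∂ν = 2 ^ p * ∫⁻ y, F y ^ p ∂ν := by
    simp_rw [ENNReal.mul_rpow_of_nonneg _ _ (zero_le_one.trans hp.le)]
    exact lintegral_const_mul _ (hF.pow_const p)
  rw [← hpow]
  exact lintegral_rpow_le_of_forall_mul_meas_lt_le hTF (hF.const_mul 2).aemeasurable hp hlevel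

end Interpolation

section Covering

lemma mul_measure_biUnion_le_of_pairwiseDisjoint {α ι : Type*} [MeasurableSpace α] {μ : Measure α}
    {u : Set ι} (hu : u.Countable) {B D : ι → Set α} (hB : ∀ i ∈ u, MeasurableSet (B i))
    (hdisj : u.PairwiseDisjoint B) {F : α → ℝ≥0∞} {t A : ℝ≥0∞}
    (h : ∀ i ∈ u, t * μ (D i) ≤ A * ∫⁻ x in B i, F x ∂μ) :
    t * μ (⋃ i ∈ u, D i) ≤ A * ∫⁻ x, F x ∂μ :=
  calc t * μ (⋃ i ∈ u, D i)
      ≤ ∑' i : u, t * μ (D i) := by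
        rw [ENNReal.tsum_mul_left]
        gcongr
        exact measure_biUnion_le μ hu D
    _ ≤ ∑' i : u, A * ∫⁻ x in B i, F x ∂μ := ENNReal.tsum_le_tsum fun i => h i i.2
    _ = A * ∫⁻ x in ⋃ i ∈ u, B i, F x ∂μ := by
        rw [ENNReal.tsum_mul_left, lintegral_biUnion hu hB hdisj]
    _ ≤ A * ∫⁻ x, F x ∂μ := by
        gcongr
        exact Measure.restrict_le_self

lemma exists_pairwiseDisjoint_ball_forall_mem_ball_two_mul {X : Type*} [PseudoMetricSpace X]
    {L : ℝ} (hL : 0 < L) {S : Set (X × ℤ)}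
    (hS : BddAbove ((fun q : X × ℤ => (2 : ℝ) ^ q.2 * L) '' S)) :
    ∃ u ⊆ S, u.PairwiseDisjoint (fun q => ball q.1 ((2 : ℝ) ^ q.2 * L)) ∧
      ∀ a ∈ S, ∃ b ∈ u, a.2 ≤ b.2 ∧ a.1 ∈ ball b.1 (2 * ((2 : ℝ) ^ b.2 * L)) := by
  obtain ⟨R, hR⟩ := hS
  obtain ⟨u, huS, hdisj, hcover⟩ := Vitali.exists_disjoint_subfamily_covering_enlargement
    (fun q : X × ℤ => ball q.1 ((2 : ℝ) ^ q.2 * L)) S (fun q => (2 : ℝ) ^ q.2 * L) (3 / 2)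
    (by norm_num) (fun _ _ => by positivity) R (fun q hq => hR (mem_image_of_mem _ hq))
    (fun _ _ => nonempty_ball.2 (by positivity))
  refine ⟨u, huS, hdisj, fun a ha => ?_⟩
  obtain ⟨b, hb, ⟨y, hya, hyb⟩, hab⟩ := hcover a ha
  -- Radii are powers of two times `L`, so a ratio at most `3 / 2` is at most `1`.
  have hscale : a.2 ≤ b.2 := by
    refine Int.lt_add_one_iff.1 ((zpow_lt_zpow_iff_right₀ (one_lt_two (α := ℝ))).1 ?_)
    rw [zpow_add_one₀ two_ne_zero]
    refine lt_of_mul_lt_mul_right (hab.trans_lt ?_) hL.le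
    have : 0 < (2 : ℝ) ^ b.2 * L := by positivity
    linarith
  have hradius : (2 : ℝ) ^ a.2 * L ≤ 2 ^ b.2 * L := by
    gcongr
    exact one_le_two
  refine ⟨b, hb, hscale, mem_ball.2 ?_⟩
  linarith [dist_triangle_left a.1 b.1 y, mem_ball.1 hya, mem_ball.1 hyb]

end Covering

section Shadow

variable {E : Type*} [NormedAddCommGroup E] [NormedSpace ℝ E]

/-- The lacunary shadow of `ball c (2 ^ n * L)` in the direction `z`: the points which some shift
`-2 ^ m • z` with `m ≤ n` moves into the doubled ball. -/
def lacunaryShadow (z : E) (L : ℝ) (c : E) (n : ℤ) : Set E :=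
  {x | ∃ m ≤ n, x - (2 : ℝ) ^ m • z ∈ ball c (2 * ((2 : ℝ) ^ n * L))}

lemma lacunaryShadow_subset_biUnion_ball {z : E} {L : ℝ} {k : ℕ} (hk : ‖z‖ ≤ 2 ^ k * L) (c : E)
    (n : ℤ) :
    lacunaryShadow z L c n ⊆
      ⋃ m ∈ Finset.Icc (n - k) n, ball (c + (2 : ℝ) ^ m • z) (3 * ((2 : ℝ) ^ n * L)) := by
  rintro x ⟨m, hmn, hx⟩
  -- All shifts below the scale `n - k` are within one radius of the shift at that scale.
  refine mem_biUnion (x := max m (n - k)) (Finset.mem_Icc.2 ⟨le_max_right _ _, ?_⟩) ?_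
  · omega
  have hbase : (2 : ℝ) ^ (n - k) * ‖z‖ ≤ 2 ^ n * L := by
    rw [zpow_sub₀ two_ne_zero, zpow_natCast, div_mul_eq_mul_div, div_le_iff₀ (by positivity),
      mul_assoc, mul_comm L]
    gcongr
  have hshift : ‖(2 : ℝ) ^ m • z - (2 : ℝ) ^ max m (n - k) • z‖ ≤ 2 ^ n * L := by
    rcases le_total (n - k) m with hm | hm
    · rw [max_eq_left hm, sub_self, norm_zero]
      exact le_trans (by positivity) hbase
    · have hpow : (2 : ℝ) ^ m ≤ 2 ^ (n - k) := zpow_le_zpow_right₀ one_le_two hm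
      rw [max_eq_right hm, ← sub_smul, norm_smul, Real.norm_eq_abs]
      refine le_trans ?_ hbase
      gcongr
      exact abs_sub_le_of_nonneg_of_le (by positivity) hpow (by positivity) le_rfl
  rw [mem_ball, dist_eq_norm] at hx ⊢
  calc ‖x - (c + (2 : ℝ) ^ max m (n - k) • z)‖
      = ‖x - (2 : ℝ) ^ m • z - c + ((2 : ℝ) ^ m • z - (2 : ℝ) ^ max m (n - k) • z)‖ := by
        congr 1
        abel
    _ ≤ ‖x - (2 : ℝ) ^ m • z - c‖ + ‖(2 : ℝ) ^ m • z - (2 : ℝ) ^ max m (n - k) • z‖ :=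
        norm_add_le _ _
    _ < 3 * ((2 : ℝ) ^ n * L) := by linarith

variable [FiniteDimensional ℝ E] [MeasurableSpace E] [BorelSpace E] (μ : Measure E)
  [μ.IsAddHaarMeasure]

lemma measure_lacunaryShadow_le {z : E} {L : ℝ} {k : ℕ} (hk : ‖z‖ ≤ 2 ^ k * L) (c : E) (n : ℤ) :
    μ (lacunaryShadow z L c n) ≤ (k + 1) * 3 ^ finrank ℝ E * μ (ball c ((2 : ℝ) ^ n * L)) := by
  have hball : ∀ m : ℤ, μ (ball (c + (2 : ℝ) ^ m • z) (3 * ((2 : ℝ) ^ n * L))) =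
      3 ^ finrank ℝ E * μ (ball c ((2 : ℝ) ^ n * L)) := by
    intro m
    rw [Measure.addHaar_ball_mul_of_pos μ _ three_pos, ENNReal.ofReal_pow three_pos.le,
      ENNReal.ofReal_ofNat, Measure.addHaar_ball_center μ c]
  have hcard : (Finset.Icc (n - k) n).card = k + 1 := by
    rw [Int.card_Icc]
    omega
  calc μ (lacunaryShadow z L c n)
      ≤ ∑ m ∈ Finset.Icc (n - k) n, μ (ball (c + (2 : ℝ) ^ m • z) (3 * ((2 : ℝ) ^ n * L))) :=
        (measure_mono (lacunaryShadow_subset_biUnion_ball hk c n)).trans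
          (measure_biUnion_finset_le _ _)
    _ = (k + 1) * 3 ^ finrank ℝ E * μ (ball c ((2 : ℝ) ^ n * L)) := by
        simp only [hball, Finset.sum_const, hcard, nsmul_eq_mul, mul_assoc]
        push_cast
        rfl

lemma bddAbove_setOf_measure_ball_le [Nontrivial E] {K : ℝ≥0∞} (hK : K ≠ ∞) :
    BddAbove {r | μ (ball (0 : E) r) ≤ K} := by
  set V : ℝ≥0∞ := μ (ball 0 1)
  have hV : V ≠ 0 := (measure_ball_pos μ 0 one_pos).ne'
  refine ⟨max 1 (K / V).toReal, fun r (hr : μ (ball 0 r) ≤ K) => ?_⟩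
  rcases le_total r 1 with hr1 | hr1
  · exact hr1.trans (le_max_left _ _)
  refine le_max_of_le_right ((ENNReal.ofReal_le_iff_le_toReal (ENNReal.div_ne_top hK hV)).1 ?_)
  rw [ENNReal.le_div_iff_mul_le (Or.inl hV) (Or.inl measure_ball_lt_top.ne)]
  calc ENNReal.ofReal r * V
      ≤ ENNReal.ofReal (r ^ finrank ℝ E) * V := by
        gcongr
        exact le_self_pow₀ hr1 finrank_pos.ne'
    _ = μ (ball 0 r) := (Measure.addHaar_ball_of_pos μ 0 (one_pos.trans_le hr1)).symm
    _ ≤ K := hr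

end Shadow

section Average

lemma lt_setLAverage_iff {α : Type*} [MeasurableSpace α] {μ : Measure α} {s : Set α}
    (hs₀ : μ s ≠ 0) (hs : μ s ≠ ∞) {F : α → ℝ≥0∞} {t : ℝ≥0∞} :
    t < ⨍⁻ x in s, F x ∂μ ↔ t * μ s < ∫⁻ x in s, F x ∂μ := by
  rw [setLAverage_eq, ENNReal.lt_div_iff_mul_lt (Or.inl hs₀) (Or.inl hs)]

lemma setLAverage_comp_of_map_eq_smul {α β : Type*} [MeasurableSpace α] [MeasurableSpace β]
    {μ : Measure α} {ν : Measure β} {g : α → β} (hg : MeasurableEmbedding g) {c : ℝ≥0∞}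
    (hc₀ : c ≠ 0) (hc : c ≠ ∞) (hmap : μ.map g = c • ν) (F : β → ℝ≥0∞) (s : Set β) :
    ⨍⁻ x in g ⁻¹' s, F (g x) ∂μ = ⨍⁻ y in s, F y ∂ν := by
  rw [setLAverage_eq, setLAverage_eq, ← hg.lintegral_map, ← hg.restrict_map, ← hg.map_apply, hmap,
    Measure.restrict_smul, lintegral_smul_measure, Measure.smul_apply, smul_eq_mul, smul_eq_mul,
    ENNReal.mul_div_mul_left _ _ hc₀ hc]

variable {E : Type*} [NormedAddCommGroup E] [NormedSpace ℝ E] [FiniteDimensional ℝ E]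
  [MeasurableSpace E] [BorelSpace E] (μ : Measure E) [μ.IsAddHaarMeasure]

lemma setLAverage_ball_comp_sub_smul (F : E → ℝ≥0∞) (x z : E) (L : ℝ) {a : ℝ} (ha : 0 < a) :
    ⨍⁻ y in ball z L, F (x - a • y) ∂μ = ⨍⁻ u in ball (x - a • z) (a * L), F u ∂μ := by
  have hmap : μ.map (fun y => x - a • y) = ENNReal.ofReal |(a ^ finrank ℝ E)⁻¹| • μ := by
    have hcomp : (fun y => x - a • y) = (fun y => x - y) ∘ (a • ·) := rfl
    rw [hcomp, ← Measure.map_map (by fun_prop) (by fun_prop), Measure.map_addHaar_smul μ ha.ne',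
      Measure.map_smul, Measure.map_sub_left_eq_self]
  have hembed : MeasurableEmbedding fun y : E => x - a • y :=
    ((Homeomorph.smulOfNeZero a ha.ne').trans (Homeomorph.subLeft x)).measurableEmbedding
  have hpre : (fun y => x - a • y) ⁻¹' ball (x - a • z) (a * L) = ball z L := by
    ext y
    rw [mem_preimage, mem_ball, mem_ball, dist_sub_left, dist_smul₀, Real.norm_of_nonneg ha.le,
      mul_lt_mul_iff_right₀ ha]
  rw [← hpre, setLAverage_comp_of_map_eq_smul hembed (by simpa using pow_pos (abs_pos.2 ha.ne') _)
    ENNReal.ofReal_ne_top hmap]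

end Average

section LacunaryMaximal

variable {E : Type*} [NormedAddCommGroup E] [NormedSpace ℝ E] [MeasurableSpace E]

/-- The lacunary maximal function over the ball `ball z L`, for functions on a normed space with
values in `[0, ∞]`. On the real line it is `lacMax`. -/
noncomputable def lacunaryMaximal (μ : Measure E) (z : E) (L : ℝ) (F : E → ℝ≥0∞) (x : E) : ℝ≥0∞ :=
  ⨆ n : ℤ, ⨍⁻ y in ball z L, F (x - (2 : ℝ) ^ n • y) ∂μ

lemma lacMax_eq_lacunaryMaximal (z L : ℝ) (f : ℝ → ℝ) :
    lacMax z L f = lacunaryMaximal volume z L fun x => ENNReal.ofReal |f x| := by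
  ext x
  simp only [lacMax, lacunaryMaximal, setLAverage_eq, ENNReal.div_eq_inv_mul, Real.volume_ball]
  simp only [Real.ball_eq_Ioo, smul_eq_mul]

lemma lacunaryMaximal_le_of_forall_le (μ : Measure E) (z : E) (L : ℝ) {F : E → ℝ≥0∞} {s : ℝ≥0∞}
    (h : ∀ x, F x ≤ s) (x : E) : lacunaryMaximal μ z L F x ≤ s :=
  iSup_le fun _ => (laverage_le_essSup _).trans (essSup_le_of_ae_le s (.of_forall fun _ => h _))

variable [BorelSpace E]

lemma lacunaryMaximal_add_le (μ : Measure E) (z : E) (L : ℝ) {F G : E → ℝ≥0∞} (hF : Measurable F)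
    (x : E) :
    lacunaryMaximal μ z L (F + G) x ≤ lacunaryMaximal μ z L F x + lacunaryMaximal μ z L G x := by
  refine iSup_le fun n => ?_
  have hFn : Measurable fun y : E => F (x - (2 : ℝ) ^ n • y) := by fun_prop
  simp only [Pi.add_apply, laverage, lintegral_add_left hFn]
  exact add_le_add (le_iSup (fun n : ℤ => ⨍⁻ y in ball z L, F (x - (2 : ℝ) ^ n • y) ∂μ) n)
    (le_iSup (fun n : ℤ => ⨍⁻ y in ball z L, G (x - (2 : ℝ) ^ n • y) ∂μ) n)

variable [FiniteDimensional ℝ E] (μ : Measure E) [μ.IsAddHaarMeasure]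

lemma measurable_lacunaryMaximal (z : E) (L : ℝ) {F : E → ℝ≥0∞} (hF : Measurable F) :
    Measurable (lacunaryMaximal μ z L F) := by
  refine .iSup fun n => Measurable.lintegral_prod_right'
    (f := fun q : E × E => F (q.1 - (2 : ℝ) ^ n • q.2)) ?_
  fun_prop

lemma lt_lacunaryMaximal_iff (z : E) {L : ℝ} (hL : 0 < L) {F : E → ℝ≥0∞} {t : ℝ≥0∞} {x : E} :
    t < lacunaryMaximal μ z L F x ↔ ∃ n : ℤ,
      t * μ (ball (x - (2 : ℝ) ^ n • z) (2 ^ n * L)) <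
        ∫⁻ u in ball (x - (2 : ℝ) ^ n • z) (2 ^ n * L), F u ∂μ := by
  rw [lacunaryMaximal, lt_iSup_iff]
  refine exists_congr fun n => ?_
  rw [setLAverage_ball_comp_sub_smul μ F x z L (by positivity),
    lt_setLAverage_iff (measure_ball_pos μ _ (by positivity)).ne' measure_ball_lt_top.ne]

variable [Nontrivial E] {z : E} {L : ℝ} {k : ℕ}

lemma mul_measure_lt_lacunaryMaximal_le (hL : 0 < L) (hk : ‖z‖ ≤ 2 ^ k * L) (F : E → ℝ≥0∞)
    (t : ℝ≥0∞) :
    t * μ {x | t < lacunaryMaximal μ z L F x} ≤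
      (k + 1) * 3 ^ finrank ℝ E * ∫⁻ x, F x ∂μ := by
  rcases eq_or_ne (∫⁻ x, F x ∂μ) ∞ with hI | hI
  · simp [hI, ENNReal.mul_top]
  rcases eq_or_ne t 0 with rfl | ht
  · simp
  let B : E × ℤ → Set E := fun q => ball q.1 ((2 : ℝ) ^ q.2 * L)
  let S : Set (E × ℤ) := {q | t * μ (B q) < ∫⁻ x in B q, F x ∂μ}
  have hS : BddAbove ((fun q : E × ℤ => (2 : ℝ) ^ q.2 * L) '' S) := by
    refine (bddAbove_setOf_measure_ball_le μ (ENNReal.div_ne_top hI ht)).mono ?_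
    rintro _ ⟨q, hq : t * μ (B q) < _, rfl⟩
    rw [mem_ofPred_eq, ← Measure.addHaar_ball_center μ q.1]
    refine ENNReal.le_div_iff_mul_le (Or.inl ht) (Or.inr hI) |>.2 ?_
    rw [mul_comm]
    exact hq.le.trans (setLIntegral_le_lintegral _ _)
  obtain ⟨u, huS, hdisj, hcover⟩ := exists_pairwiseDisjoint_ball_forall_mem_ball_two_mul hL hS
  have hcount : u.Countable := hdisj.countable_of_isOpen (fun _ _ => isOpen_ball)
    fun _ _ => nonempty_ball.2 (by positivity)
  have hlevel : {x | t < lacunaryMaximal μ z L F x} ⊆ ⋃ q ∈ u, lacunaryShadow z L q.1 q.2 := by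
    intro x hx
    obtain ⟨n, hn⟩ := (lt_lacunaryMaximal_iff μ z hL).1 hx
    obtain ⟨q, hq, hnq, hmem⟩ := hcover (x - (2 : ℝ) ^ n • z, n) hn
    exact mem_biUnion hq ⟨n, hnq, hmem⟩
  refine (mul_le_mul_right (measure_mono hlevel) t).trans ?_
  refine mul_measure_biUnion_le_of_pairwiseDisjoint hcount (fun _ _ => measurableSet_ball) hdisj
    fun q hq => ?_
  calc t * μ (lacunaryShadow z L q.1 q.2)
      ≤ t * ((k + 1) * 3 ^ finrank ℝ E * μ (B q)) := by
        gcongr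
        exact measure_lacunaryShadow_le μ hk q.1 q.2
    _ = (k + 1) * 3 ^ finrank ℝ E * (t * μ (B q)) := mul_left_comm _ _ _
    _ ≤ (k + 1) * 3 ^ finrank ℝ E * ∫⁻ x in B q, F x ∂μ := by
        gcongr
        exact (huS hq).le

lemma lintegral_lacunaryMaximal_rpow_le (hL : 0 < L) (hk : ‖z‖ ≤ 2 ^ k * L) {F : E → ℝ≥0∞}
    (hF : Measurable F) {p : ℝ} (hp : 1 < p) :
    ∫⁻ x, lacunaryMaximal μ z L F x ^ p ∂μ ≤
      ENNReal.ofReal (p / (p - 1) * ((k + 1) * 3 ^ finrank ℝ E) * 2 ^ p) * ∫⁻ x, F x ^ p ∂μ := by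
  have : 0 < p - 1 := sub_pos.2 hp
  have hconst : ENNReal.ofReal (p / (p - 1) * ((k + 1) * 3 ^ finrank ℝ E) * 2 ^ p) =
      ENNReal.ofReal (p / (p - 1)) * ((k + 1) * 3 ^ finrank ℝ E) * 2 ^ p := by
    rw [ENNReal.ofReal_mul (by positivity), ENNReal.ofReal_mul (by positivity),
      ENNReal.ofReal_mul (by positivity), ENNReal.ofReal_add (by positivity) zero_le_one,
      ENNReal.ofReal_natCast, ENNReal.ofReal_one, ENNReal.ofReal_pow (by positivity),
      ← ENNReal.ofReal_rpow_of_pos two_pos, ENNReal.ofReal_ofNat, ENNReal.ofReal_ofNat]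
  rw [hconst, mul_assoc _ (2 ^ p)]
  exact lintegral_rpow_le_of_weakType_one_one (T := lacunaryMaximal μ z L)
    (fun _ _ hG _ => lacunaryMaximal_add_le μ z L hG)
    (fun _ _ => lacunaryMaximal_le_of_forall_le μ z L)
    (fun G _ => mul_measure_lt_lacunaryMaximal_le μ hL hk G) hF
    (measurable_lacunaryMaximal μ z L hF).aemeasurable hp

end LacunaryMaximal

lemma exists_nat_two_mul_le_two_pow_and_add_one_le_logb {A : ℝ} (hA : 0 ≤ A) :
    ∃ k : ℕ, 2 * A ≤ 2 ^ k ∧ (k + 1 : ℝ) ≤ 4 * Real.logb 2 (2 + A) := by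
  set l : ℝ := Real.logb 2 (2 + A) with hl
  have hl1 : 1 ≤ l := by
    rw [hl, Real.le_logb_iff_rpow_le one_lt_two (by positivity), Real.rpow_one]
    linarith
  refine ⟨⌈l⌉₊ + 1, ?_, ?_⟩
  · have hpow : 2 + A ≤ 2 ^ ⌈l⌉₊ := by
      rw [← Real.rpow_natCast, ← Real.logb_le_iff_le_rpow one_lt_two (by positivity)]
      exact Nat.le_ceil l
    rw [pow_succ]
    linarith
  · have hceil := Nat.ceil_lt_add_one (a := l) (by positivity)
    push_cast
    linarith

theorem stmt7_general {E : Type*} [NormedAddCommGroup E] [NormedSpace ℝ E]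
    [FiniteDimensional ℝ E] [Nontrivial E] [MeasurableSpace E] [BorelSpace E] (μ : Measure E)
    [μ.IsAddHaarMeasure] (p : ℝ) (hp : 1 < p) :
    ∃ C : ℝ, 0 < C ∧ ∀ (z : E) (L : ℝ), 0 < L → ∀ F : E → ℝ≥0∞, Measurable F →
      (∫⁻ x, lacunaryMaximal μ z L F x ^ p ∂μ) ^ (1 / p)
        ≤ ENNReal.ofReal (C * Real.log (2 + ‖z‖ / (2 * L)) ^ (1 / p)) *
            (∫⁻ x, F x ^ p ∂μ) ^ (1 / p) := by
  have : 0 < p - 1 := sub_pos.2 hp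
  have : 0 < p := zero_lt_one.trans hp
  have : 0 < Real.log 2 := Real.log_pos one_lt_two
  set c : ℝ := p / (p - 1) * (4 / Real.log 2 * 3 ^ finrank ℝ E) * 2 ^ p with hc
  have hc0 : 0 < c := by positivity
  refine ⟨c ^ (1 / p), by positivity, fun z L hL F hF => ?_⟩
  have hA : 0 ≤ ‖z‖ / (2 * L) := by positivity
  have hlog : 0 < Real.log (2 + ‖z‖ / (2 * L)) := Real.log_pos (by linarith)
  obtain ⟨k, hk, hklog⟩ := exists_nat_two_mul_le_two_pow_and_add_one_le_logb hA
  have hzL : ‖z‖ ≤ 2 ^ k * L := by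
    rwa [← div_le_iff₀ hL, show ‖z‖ / L = 2 * (‖z‖ / (2 * L)) by field_simp]
  rw [← Real.mul_rpow hc0.le hlog.le,
    ← ENNReal.ofReal_rpow_of_nonneg (by positivity) (by positivity),
    ← ENNReal.mul_rpow_of_nonneg _ _ (by positivity)]
  gcongr
  refine (lintegral_lacunaryMaximal_rpow_le μ hL hzL hF hp).trans ?_
  gcongr ENNReal.ofReal ?_ * _
  calc p / (p - 1) * ((k + 1) * 3 ^ finrank ℝ E) * 2 ^ p
      ≤ p / (p - 1) * (4 * Real.logb 2 (2 + ‖z‖ / (2 * L)) * 3 ^ finrank ℝ E) * 2 ^ p := by gcongr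
    _ = c * Real.log (2 + ‖z‖ / (2 * L)) := by
        rw [hc, Real.logb]
        ring

/-- Lemma 3.1, strong type `(p,p)` part: `N_I` maps `L^p → L^p` with operator norm
`O((log(2 + |z|/|I|))^{1/p})` for `1 < p < ∞`. -/
theorem stmt7 (p : ℝ) (hp : 1 < p) :
    ∃ C : ℝ, 0 < C ∧ ∀ z L : ℝ, 0 < L → ∀ f : ℝ → ℝ, Measurable f →
      (∫⁻ x, lacMax z L f x ^ p) ^ (1 / p)
        ≤ ENNReal.ofReal (C * Real.log (2 + |z| / (2 * L)) ^ (1 / p)) *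
            (∫⁻ x, ENNReal.ofReal (|f x| ^ p)) ^ (1 / p) := by
  obtain ⟨C, hC, h⟩ := stmt7_general (volume : Measure ℝ) p hp
  refine ⟨C, hC, fun z L hL f hf => ?_⟩
  simpa only [lacMax_eq_lacunaryMaximal, Real.norm_eq_abs, ENNReal.ofReal_rpow_of_nonneg
    (abs_nonneg _) (zero_le_one.trans hp.le)] using h z L hL _ hf.abs.ennreal_ofReal
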